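/- For every z ∈ ℝ the rank of 𝒜(z) equals min{μ,r}·min{ν,q} (in particular the rank is independent of z). If μ = r and ν = q, then 𝒜(z) is a square qr×qr matrix that is invertible for every z, with det 𝒜(z) = (−1)^{qr(q−1)(r−1)/4}. -/

import Mathlib

open Matrix Kronecker

noncomputable section

/-- The `k × k` shift matrix with `(i,j)` entry `δ_{i+1,j}`. -/
def Sh (k : ℕ) : Matrix (Fin k) (Fin k) ℝ :=
  Matrix.of fun i j => if (i : ℕ) + 1 = (j : ℕ) then 1 else 0

/-- The matrix `A^k(z) ∈ ℝ^{q×r}`, with entries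
`k!/(i!·j!·(k−i−j)!)·z^{k−i−j} = C(k,i)·C(k−i,j)·z^{k−i−j}` for `i+j ≤ k`, else `0`. -/
def Amat (q r k : ℕ) (z : ℝ) : Matrix (Fin q) (Fin r) ℝ :=
  Matrix.of fun i j =>
    if (i : ℕ) + (j : ℕ) ≤ k then
      (Nat.choose k i : ℝ) * (Nat.choose (k - i) j : ℝ) * z ^ (k - i - j)
    else 0

/-- The block matrix `𝒜(z) ∈ ℝ^{μq×νr}` with `(i,j)` block `A^{i+j}(z)`. -/
def Acal (q r μ ν : ℕ) (z : ℝ) : Matrix (Fin μ × Fin q) (Fin ν × Fin r) ℝ :=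
  Matrix.of fun p p' => Amat q r ((p.1 : ℕ) + (p'.1 : ℕ)) z p.2 p'.2

/-- `A^0 = e₀ f₀ᵀ ∈ ℝ^{q×r}`. -/
def A0 (q r : ℕ) : Matrix (Fin q) (Fin r) ℝ :=
  Matrix.of fun a b => if (a : ℕ) = 0 ∧ (b : ℕ) = 0 then 1 else 0

/-- The block matrix `Ā ∈ ℝ^{μq×νr}` with `(i,j)` block `(S_qᵀ)^j · A^0 · S_r^i`. -/
def Abar (q r μ ν : ℕ) : Matrix (Fin μ × Fin q) (Fin ν × Fin r) ℝ :=
  Matrix.of fun p p' =>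
    (((Sh q)ᵀ) ^ (p'.1 : ℕ) * A0 q r * (Sh r) ^ (p.1 : ℕ)) p.2 p'.2

/-- `J_k(z) = z·I_k + S_kᵀ`. -/
def Jmat (k : ℕ) (z : ℝ) : Matrix (Fin k) (Fin k) ℝ := z • 1 + (Sh k)ᵀ

/-- The block lower-triangular matrix `𝓛_{m,k}(z)` with `(i,j)` block `C(i,j)·J_k(z)^{i−j}`
for `i ≥ j` and `0` otherwise. -/
def Lmat (m k : ℕ) (z : ℝ) : Matrix (Fin m × Fin k) (Fin m × Fin k) ℝ :=
  Matrix.of fun p p' =>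
    if (p'.1 : ℕ) ≤ (p.1 : ℕ) then
      (Nat.choose p.1 p'.1 : ℝ) * ((Jmat k z) ^ ((p.1 : ℕ) - (p'.1 : ℕ))) p.2 p'.2
    else 0

/-- Natural (block row-major) identification of `Fin (m*n)` with `Fin m × Fin n`. -/
def bIdx (m n : ℕ) : Fin (m * n) → Fin m × Fin n := fun x => finProdFinEquiv.symm x

/-- `M^{(n)}(z) ∈ ℝ^{q×r}`, the `n`-th derivative of `M(z) = u(z)w(z)`,
whose `(a,b)` entry is the `n`-th derivative of `z^{a+b}`. -/
def Md (q r n : ℕ) (z : ℝ) : Matrix (Fin q) (Fin r) ℝ :=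
  Matrix.of fun a b => iteratedDeriv n (fun t : ℝ => t ^ ((a : ℕ) + (b : ℕ))) z

/-- The block matrix `𝓜(z) ∈ ℝ^{μq×νr}` with `(i,j)` block `M^{(i+j)}(z)`. -/
def Mcal (q r μ ν : ℕ) (z : ℝ) : Matrix (Fin μ × Fin q) (Fin ν × Fin r) ℝ :=
  Matrix.of fun p p' => Md q r ((p.1 : ℕ) + (p'.1 : ℕ)) z p.2 p'.2

/-- The block matrix `𝓝(z) ∈ ℝ^{μq×νr}` with `(i,j)` block `M^{(i+j)}(z)/(i!·j!)`. -/
def Ncal (q r μ ν : ℕ) (z : ℝ) : Matrix (Fin μ × Fin q) (Fin ν × Fin r) ℝ :=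
  Matrix.of fun p p' =>
    Md q r ((p.1 : ℕ) + (p'.1 : ℕ)) z p.2 p'.2 /
      ((Nat.factorial (p.1 : ℕ) : ℝ) * (Nat.factorial (p'.1 : ℕ) : ℝ))

/-- `𝓝^0(z) = (M(z)/0!, …, M^{(ν−1)}(z)/(ν−1)!) ∈ ℝ^{q×νr}`. -/
def Ncal0 (q r ν : ℕ) (z : ℝ) : Matrix (Fin q) (Fin ν × Fin r) ℝ :=
  Matrix.of fun a p => Md q r (p.1 : ℕ) z a p.2 / (Nat.factorial (p.1 : ℕ) : ℝ)

/-- `𝓜^0(z) = (M(z), M'(z), …, M^{(ν−1)}(z)) ∈ ℝ^{q×νr}`. -/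
def M0cal (q r ν : ℕ) (z : ℝ) : Matrix (Fin q) (Fin ν × Fin r) ℝ :=
  Matrix.of fun a p => Md q r (p.1 : ℕ) z a p.2

/-- `U_q(z)` with columns `u(z), u'(z), …, u^{(q−1)}(z)`, where `u_a(z) = z^a`. -/
def Uq (q : ℕ) (z : ℝ) : Matrix (Fin q) (Fin q) ℝ :=
  Matrix.of fun a j => iteratedDeriv (j : ℕ) (fun t : ℝ => t ^ (a : ℕ)) z

/-- `W_r(z)` with rows `w(z), w'(z), …, w^{(r−1)}(z)`, where `w_b(z) = z^b`. -/
def Wrm (r : ℕ) (z : ℝ) : Matrix (Fin r) (Fin r) ℝ :=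
  Matrix.of fun i b => iteratedDeriv (i : ℕ) (fun t : ℝ => t ^ (b : ℕ)) z

/-- `Ũ_m(z)` with entries `C(i,j)·z^{i−j}` for `i ≥ j` and `0` otherwise. -/
def Ut (m : ℕ) (z : ℝ) : Matrix (Fin m) (Fin m) ℝ :=
  Matrix.of fun i j =>
    if (j : ℕ) ≤ (i : ℕ) then (Nat.choose i j : ℝ) * z ^ ((i : ℕ) - (j : ℕ)) else 0

/-- `W̃_m(z)` with entries `C(j,i)·z^{j−i}` for `j ≥ i` and `0` otherwise. -/
def Wt (m : ℕ) (z : ℝ) : Matrix (Fin m) (Fin m) ℝ :=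
  Matrix.of fun i j =>
    if (i : ℕ) ≤ (j : ℕ) then (Nat.choose j i : ℝ) * z ^ ((j : ℕ) - (i : ℕ)) else 0

/-- `D_m`, the diagonal matrix with `(i,i)` entry `i!`. -/
def Dm (m : ℕ) : Matrix (Fin m) (Fin m) ℝ :=
  Matrix.diagonal fun i => (Nat.factorial (i : ℕ) : ℝ)

/-- The block matrix `Â` whose `(i,j)` block has `(k,l)` entry `C(i+j,i)` if `k+l = i+j`, else 0. -/
def Ahat (q r μ ν : ℕ) : Matrix (Fin μ × Fin q) (Fin ν × Fin r) ℝ :=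
  Matrix.of fun p p' =>
    if (p.2 : ℕ) + (p'.2 : ℕ) = (p.1 : ℕ) + (p'.1 : ℕ) then
      (Nat.choose ((p.1 : ℕ) + (p'.1 : ℕ)) (p.1 : ℕ) : ℝ)
    else 0

/-- `F(z) ∈ ℝ^{r×(r−1)}` with `F_{ii} = −z`, `F_{i+1,i} = 1`, else `0`. -/
def Fm (r : ℕ) (z : ℝ) : Matrix (Fin r) (Fin (r - 1)) ℝ :=
  Matrix.of fun a b =>
    if (a : ℕ) = (b : ℕ) then -z else if (a : ℕ) = (b : ℕ) + 1 then 1 else 0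

/-- `F'(z)`, the (constant) derivative of `F(z)`: `−1` on the diagonal, `0` elsewhere. -/
def Fm' (r : ℕ) : Matrix (Fin r) (Fin (r - 1)) ℝ :=
  Matrix.of fun a b => if (a : ℕ) = (b : ℕ) then -1 else 0

/-- `G(z) ∈ ℝ^{r×r}` with entries `z^{j−i−1}` for `j > i`, else `0`. -/
def Gm (r : ℕ) (z : ℝ) : Matrix (Fin r) (Fin r) ℝ :=
  Matrix.of fun i j => if (i : ℕ) < (j : ℕ) then z ^ ((j : ℕ) - (i : ℕ) - 1) else 0

/-- entrywise `j`-th derivative `G^{(n)}(z)`. -/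
def Gd (r n : ℕ) (z : ℝ) : Matrix (Fin r) (Fin r) ℝ :=
  Matrix.of fun i j =>
    iteratedDeriv n (fun t : ℝ => if (i : ℕ) < (j : ℕ) then t ^ ((j : ℕ) - (i : ℕ) - 1) else 0) z

/-- the row vector `w(z)` with entries `z^b`. -/
def wv (r : ℕ) (z : ℝ) : Fin r → ℝ := fun b => z ^ (b : ℕ)

/-- the `n`-th derivative `w^{(n)}(z)`. -/
def wd (r n : ℕ) (z : ℝ) : Fin r → ℝ := fun b => iteratedDeriv n (fun t : ℝ => t ^ (b : ℕ)) z

/-- the `n`-th derivative `u^{(n)}(z)` of the column vector `u(z)` with entries `z^a`. -/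
def ud (q n : ℕ) (z : ℝ) : Fin q → ℝ := fun a => iteratedDeriv n (fun t : ℝ => t ^ (a : ℕ)) z

/-- The matrix `K̄(z)`:
`[[I_q⊗F(z) + S_q⊗F'(z), −ℓ_q fᵀ ⊗ G(z)], [0, I_{ν−q}⊗I_r − S_{ν−q}⊗G(z)]]`. -/
def Kbar (q r ν : ℕ) (z : ℝ) :
    Matrix (Fin ν × Fin r) ((Fin q × Fin (r - 1)) ⊕ (Fin (ν - q) × Fin r)) ℝ :=
  Matrix.of fun p s =>
    match s with
    | Sum.inl c =>
        (if (p.1 : ℕ) = (c.1 : ℕ) then Fm r z p.2 c.2 else 0) +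
        (if (p.1 : ℕ) + 1 = (c.1 : ℕ) then Fm' r p.2 c.2 else 0)
    | Sum.inr c =>
        (if (p.1 : ℕ) = q + (c.1 : ℕ) then (if p.2 = c.2 then 1 else 0) else 0) +
        (if (p.1 : ℕ) + 1 = q + (c.1 : ℕ) then -(Gm r z p.2 c.2) else 0)

/-- `F_k(z) ∈ ℝ^{(r−k)×(r−1−k)}`. -/
def Fmk (r k : ℕ) (z : ℝ) : Matrix (Fin (r - k)) (Fin (r - (k + 1))) ℝ :=
  Matrix.of fun a b =>
    if (a : ℕ) = (b : ℕ) then -z else if (a : ℕ) = (b : ℕ) + 1 then 1 else 0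

/-- `F_k'(z)`, the (constant) derivative of `F_k(z)`. -/
def Fmk' (r k : ℕ) : Matrix (Fin (r - k)) (Fin (r - (k + 1))) ℝ :=
  Matrix.of fun a b => if (a : ℕ) = (b : ℕ) then -1 else 0

/-- `K_k(z) = I_ν ⊗ F_k(z) + S_ν ⊗ F_k'(z)`. -/
def Kk (ν r k : ℕ) (z : ℝ) :
    Matrix (Fin ν × Fin (r - k)) (Fin ν × Fin (r - (k + 1))) ℝ :=
  (1 : Matrix (Fin ν) (Fin ν) ℝ) ⊗ₖ Fmk r k z + Sh ν ⊗ₖ Fmk' r k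

/-- `KP ν r z m = K_0(z) · K_1(z) ⋯ K_{m−1}(z)` (so `KP ν r z μ = 𝒦^{μ−1}(z)`). -/
def KP (ν r : ℕ) (z : ℝ) : (m : ℕ) → Matrix (Fin ν × Fin r) (Fin ν × Fin (r - m)) ℝ
  | 0 => Matrix.of fun p p' => if p.1 = p'.1 ∧ (p.2 : ℕ) = (p'.2 : ℕ) then 1 else 0
  | m + 1 => KP ν r z m * Kk ν r m z

/-- `𝒜^0 = (A^0, A^1, …, A^{ν−1}) ∈ ℝ^{q×νr}` (at `z = 0`). -/
def A0row (q r ν : ℕ) : Matrix (Fin q) (Fin ν × Fin r) ℝ :=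
  Matrix.of fun a p =>
    if (a : ℕ) + (p.2 : ℕ) = (p.1 : ℕ) then (Nat.choose (p.1 : ℕ) (a : ℕ) : ℝ) else 0

/-- `B^k ∈ ℝ^{r×q}` with entries `(−1)^i·C(q,k+1)` if `i+j = k`, else `0`. -/
def Bk (q r k : ℕ) : Matrix (Fin r) (Fin q) ℝ :=
  Matrix.of fun i j =>
    if (i : ℕ) + (j : ℕ) = k then (-1 : ℝ) ^ (i : ℕ) * (Nat.choose q (k + 1) : ℝ) else 0

/-- `𝓑^0 ∈ ℝ^{νr×q}`, the blocks `B^0, …, B^{ν−1}` stacked vertically. -/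
def B0cal (q r ν : ℕ) : Matrix (Fin ν × Fin r) (Fin q) ℝ :=
  Matrix.of fun p j => Bk q r (p.1 : ℕ) p.2 j

/-- Left multiplication by a fixed matrix, as a linear map. -/
def mulLeftLM {m n p : Type*} [Fintype n] (M : Matrix m n ℝ) :
    Matrix n p ℝ →ₗ[ℝ] Matrix m p ℝ where
  toFun X := M * X
  map_add' X Y := Matrix.mul_add M X Y
  map_smul' c X := by simp [Matrix.mul_smul]

/-- The right inverse `𝓜(z)⁺`. -/
def Mplus (q r μ ν : ℕ) (z : ℝ) : Matrix (Fin ν × Fin r) (Fin μ × Fin q) ℝ :=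
  ((1 : Matrix (Fin ν) (Fin ν) ℝ) ⊗ₖ (Wrm r z)⁻¹) * (Lmat ν r 0)⁻¹ *
    (Abar q r μ ν)ᵀ * (Lmat μ q 0)⁻¹ * ((1 : Matrix (Fin μ) (Fin μ) ℝ) ⊗ₖ (Uq q z)⁻¹)

/-!
The entries of `𝒜(z)` are the coefficients of `x^a y^b` in `(x + y + z)^(i+j)`. Expand the factor
`(x + y + z)^i` in powers of `y` and the factor `(x + y + z)^j` in powers of `x`: the coefficient
becomes a sum over `(s, t)` of
`[x^a y^s] (x^t (x + y + z)^i) * [x^t y^b] (y^s (x + y + z)^j)`,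
and only the terms with `s < min μ r` and `t < min ν q` contribute. So `𝒜(z)` factors through a
space of dimension `min μ r * min ν q`. In the square case both factors are unitriangular up to the
exchange `(s, t) ↦ (t, s)`, whose sign is the determinant. In general, `𝒜(z)` has a square submatrix
of that size which is again of the same form, so the bound on the rank is attained.
-/

section

open Polynomial
open Equiv (Perm)
open scoped Finset

lemma sign_eq_neg_one_pow_card_inversions {n : ℕ} (σ : Perm (Fin n)) :
    Perm.sign σ = (-1) ^ #{x : Fin n × Fin n | x.1 < x.2 ∧ σ x.2 < σ x.1} := by
  rw [Perm.sign_eq_prod_prod_Ioi, ← Finset.prod_const, Finset.prod_filter,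
    Fintype.prod_prod_type]
  refine Finset.prod_congr rfl fun i _ => ?_
  rw [← Finset.filter_lt_eq_Ioi, Finset.prod_filter]
  refine Finset.prod_congr rfl fun j _ => ?_
  rcases lt_trichotomy (σ i) (σ j) with h | h | h
  · simp [h, h.not_gt]
  · simp [σ.injective h]
  · simp [h, h.not_gt]

lemma finProdFinEquiv_lt_iff {m n : ℕ} (x y : Fin m × Fin n) :
    finProdFinEquiv x < finProdFinEquiv y ↔ x.1 < y.1 ∨ x.1 = y.1 ∧ x.2 < y.2 := by
  have lt_of_fst_lt {u v : Fin m × Fin n} (h : u.1 < v.1) :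
      finProdFinEquiv u < finProdFinEquiv v := by
    have : n * (u.1 + 1) ≤ n * v.1 := Nat.mul_le_mul_left n h
    have := u.2.isLt
    simp only [Fin.lt_def, finProdFinEquiv_apply_val]
    lia
  rcases lt_trichotomy x.1 y.1 with h | h | h
  · simp [h, lt_of_fst_lt h]
  · simp [h, ← Fin.val_fin_lt]
  · simp [h.not_gt, h.ne', (lt_of_fst_lt h).le]

/-- The permutation of the positions of the entries of an `m × n` matrix that takes the row-major
enumeration to the column-major one. -/
def majorSwap (m n : ℕ) : Perm (Fin (m * n)) :=
  finProdFinEquiv.symm.trans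
    ((Equiv.prodComm _ _).trans (finProdFinEquiv.trans (finCongr (mul_comm n m))))

lemma majorSwap_lt_iff {m n : ℕ} (x y : Fin m × Fin n) :
    majorSwap m n (finProdFinEquiv x) < majorSwap m n (finProdFinEquiv y) ↔
      x.2 < y.2 ∨ x.2 = y.2 ∧ x.1 < y.1 := by
  simpa [majorSwap] using finProdFinEquiv_lt_iff x.swap y.swap

lemma card_inversions_majorSwap (m n : ℕ) :
    #{x : Fin (m * n) × Fin (m * n) | x.1 < x.2 ∧ majorSwap m n x.2 < majorSwap m n x.1} =
      m.choose 2 * n.choose 2 := by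
  have card_lt (k : ℕ) : #{x : Fin k × Fin k | x.1 < x.2} = k.choose 2 := by
    simpa using Finset.card_product_filter_lt (s := (Finset.univ : Finset (Fin k)))
  have card_gt (k : ℕ) : #{x : Fin k × Fin k | x.2 < x.1} = k.choose 2 := by
    rw [← card_lt]
    exact Finset.card_equiv (Equiv.prodComm _ _) (by simp)
  rw [← card_lt m, ← card_gt n, ← Finset.card_product]
  symm
  refine Finset.card_equiv ((Equiv.prodProdProdComm _ _ _ _).trans
    (finProdFinEquiv.prodCongr finProdFinEquiv)) ?_
  rintro ⟨⟨i, j⟩, ⟨a, b⟩⟩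
  simp only [Finset.mem_product, Finset.mem_filter, Finset.mem_univ, true_and, Equiv.trans_apply,
    Equiv.prodProdProdComm_apply, Equiv.prodCongr_apply, Prod.map_apply, finProdFinEquiv_lt_iff,
    majorSwap_lt_iff]
  lia

lemma sign_majorSwap (m n : ℕ) :
    Perm.sign (majorSwap m n) = (-1) ^ (m.choose 2 * n.choose 2) := by
  rw [sign_eq_neg_one_pow_card_inversions, card_inversions_majorSwap]

lemma choose_two_mul_choose_two (m n : ℕ) :
    m.choose 2 * n.choose 2 = m * n * (m - 1) * (n - 1) / 4 := by
  rw [Nat.choose_two_right, Nat.choose_two_right,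
    Nat.div_mul_div_comm m.even_mul_pred_self.two_dvd n.even_mul_pred_self.two_dvd]
  congr 1
  ring

section Factorization

variable {R : Type*} [CommSemiring R]

/-- The coefficient of `x^a y^b` in `(x + y + z)^k`. The outer variable of `R[X][X]` is `x` and the
inner one is `y`. -/
def trinomialCoeff (z : R) (k a b : ℕ) : R :=
  (((X + C (X + C z)) ^ k : R[X][X]).coeff a).coeff b

lemma trinomialCoeff_eq_choose_mul_choose (z : R) (k a b : ℕ) :
    trinomialCoeff z k a b = k.choose a * (k - a).choose b * z ^ (k - a - b) := by
  rw [trinomialCoeff, coeff_X_add_C_pow, ← C_eq_natCast, coeff_mul_C, coeff_X_add_C_pow]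
  ring

/-- The coefficient of `x^a y^s` in `x^t (x + y + z)^i`. -/
def shiftedTrinomialCoeff (z : R) (i a s t : ℕ) : R :=
  i.choose s * ((X + C z) ^ (i - s) * X ^ t).coeff a

lemma shiftedTrinomialCoeff_eq_zero_of_lt_left (z : R) {i s : ℕ} (a t : ℕ) (h : i < s) :
    shiftedTrinomialCoeff z i a s t = 0 := by
  simp [shiftedTrinomialCoeff, Nat.choose_eq_zero_of_lt h]

lemma shiftedTrinomialCoeff_eq_zero_of_lt_right (z : R) (i s : ℕ) {a t : ℕ} (h : a < t) :
    shiftedTrinomialCoeff z i a s t = 0 := by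
  simp [shiftedTrinomialCoeff, coeff_mul_X_pow', h.not_ge]

lemma shiftedTrinomialCoeff_self (z : R) (i a t : ℕ) :
    shiftedTrinomialCoeff z i a i t = if a = t then 1 else 0 := by
  simp [shiftedTrinomialCoeff, coeff_X_pow]

lemma trinomialCoeff_add (z : R) (i j a b : ℕ) :
    trinomialCoeff z (i + j) a b = ∑ s ∈ Finset.range (i + 1), ∑ t ∈ Finset.range (j + 1),
      shiftedTrinomialCoeff z i a s t * shiftedTrinomialCoeff z j b t s := by
  have expand_left : (X + C (X + C z)) ^ i = ∑ s ∈ Finset.range (i + 1),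
      C (X ^ s) * ((X + C z) ^ (i - s)).map C * (i.choose s : R[X][X]) := by
    rw [show X + C (X + C z) = C X + (X + C z).map C by
      simp only [C_add, Polynomial.map_add, map_X, map_C]; ring, add_pow]
    simp only [C_pow, Polynomial.map_pow]
  have expand_right : (X + C (X + C z)) ^ j = ∑ t ∈ Finset.range (j + 1),
      (X ^ t).map C * C ((X + C z) ^ (j - t)) * (j.choose t : R[X][X]) := by
    rw [add_pow]
    simp only [C_pow, Polynomial.map_pow, map_X]
  have regroup (s t : ℕ) :
      C (X ^ s) * ((X + C z) ^ (i - s)).map C * (i.choose s : R[X][X]) *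
          ((X ^ t).map C * C ((X + C z) ^ (j - t)) * (j.choose t : R[X][X])) =
        C (C ((i.choose s : R) * j.choose t)) *
          (((X + C z) ^ (i - s) * X ^ t).map C * C ((X + C z) ^ (j - t) * X ^ s)) := by
    simp only [Polynomial.map_mul, C_mul, map_natCast]
    ring
  rw [trinomialCoeff, pow_add, expand_left, expand_right, Finset.sum_mul_sum]
  simp only [regroup, finsetSum_coeff, coeff_C_mul, coeff_mul_C, coeff_map,
    shiftedTrinomialCoeff]
  exact Finset.sum_congr rfl fun s _ => Finset.sum_congr rfl fun t _ => by ring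

lemma trinomialCoeff_add_eq_sum_range (z : R) {i j a b m n : ℕ} (hm : min i b < m)
    (hn : min j a < n) :
    trinomialCoeff z (i + j) a b = ∑ s ∈ Finset.range m, ∑ t ∈ Finset.range n,
      shiftedTrinomialCoeff z i a s t * shiftedTrinomialCoeff z j b t s := by
  have eq_zero_of_le_fst (s t : ℕ) (hs : min i b + 1 ≤ s) :
      shiftedTrinomialCoeff z i a s t * shiftedTrinomialCoeff z j b t s = 0 := by
    rcases lt_or_ge i s with h | h
    · rw [shiftedTrinomialCoeff_eq_zero_of_lt_left z a t h, zero_mul]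
    · rw [shiftedTrinomialCoeff_eq_zero_of_lt_right z j t (by lia), mul_zero]
  have eq_zero_of_le_snd (s t : ℕ) (ht : min j a + 1 ≤ t) :
      shiftedTrinomialCoeff z i a s t * shiftedTrinomialCoeff z j b t s = 0 := by
    rcases lt_or_ge j t with h | h
    · rw [shiftedTrinomialCoeff_eq_zero_of_lt_left z b s h, mul_zero]
    · rw [shiftedTrinomialCoeff_eq_zero_of_lt_right z i s (by lia), zero_mul]
  have sum_range_eq {f : ℕ → R} {N k l : ℕ} (hf : ∀ x ≥ N, f x = 0) (hk : N ≤ k) (hl : N ≤ l) :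
      ∑ x ∈ Finset.range k, f x = ∑ x ∈ Finset.range l, f x :=
    (Finset.eventually_constant_sum hf hk).trans (Finset.eventually_constant_sum hf hl).symm
  rw [trinomialCoeff_add]
  trans ∑ s ∈ Finset.range (i + 1), ∑ t ∈ Finset.range n,
    shiftedTrinomialCoeff z i a s t * shiftedTrinomialCoeff z j b t s
  · exact Finset.sum_congr rfl fun s _ => sum_range_eq (eq_zero_of_le_snd s) (by lia) hn
  · exact sum_range_eq (fun s hs => Finset.sum_eq_zero fun t _ => eq_zero_of_le_fst s t hs)
      (by lia) hm

/-- `𝒜(z)` over an arbitrary commutative semiring. -/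
def trinomialMatrix (q r μ ν : ℕ) (z : R) : Matrix (Fin μ × Fin q) (Fin ν × Fin r) R :=
  Matrix.of fun x y => trinomialCoeff z (x.1 + y.1) x.2 y.2

/-- The left factor of `𝒜(z)`; the transpose of the right factor is also of this form, up to the
exchange of `s` and `t` in the column index `(s, t)`. -/
def trinomialFactor (μ q m n : ℕ) (z : R) : Matrix (Fin μ × Fin q) (Fin m × Fin n) R :=
  Matrix.of fun x y => shiftedTrinomialCoeff z x.1 x.2 y.1 y.2

lemma trinomialMatrix_eq_mul {q r μ ν m n : ℕ} (z : R) (hm : min μ r ≤ m) (hn : min ν q ≤ n) :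
    trinomialMatrix q r μ ν z =
      trinomialFactor μ q m n z * (trinomialFactor ν r n m z)ᵀ.submatrix Prod.swap id := by
  ext ⟨i, a⟩ ⟨j, b⟩
  simp only [trinomialMatrix, trinomialFactor, Matrix.mul_apply, Matrix.of_apply,
    Matrix.submatrix_apply, Matrix.transpose_apply, Fintype.sum_prod_type, Prod.swap, id]
  rw [trinomialCoeff_add_eq_sum_range (m := m) (n := n) z (by lia) (by lia), Finset.sum_range]
  exact Finset.sum_congr rfl fun s _ => Finset.sum_range _

end Factorization

section DeterminantAndRank

variable {R : Type*} [CommRing R]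

lemma det_trinomialFactor (m n : ℕ) (z : R) : (trinomialFactor m n m n z).det = 1 := by
  have lower_triangular : (trinomialFactor m n m n z).BlockTriangular
      fun x => OrderDual.toDual x.1 :=
    fun x y h => shiftedTrinomialCoeff_eq_zero_of_lt_left z _ _ h
  rw [lower_triangular.det_fintype]
  refine Finset.prod_eq_one fun k _ => ?_
  have diagonal_block :
      (trinomialFactor m n m n z).toSquareBlock (fun x => OrderDual.toDual x.1) k = 1 := by
    ext ⟨⟨i, a⟩, rfl⟩ ⟨⟨j, b⟩, h⟩
    obtain rfl : j = i := h
    simp [trinomialFactor, Matrix.toSquareBlock_def, Matrix.one_apply,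
      shiftedTrinomialCoeff_self, Fin.val_inj, Subtype.ext_iff]
  rw [diagonal_block, Matrix.det_one]

lemma det_trinomialMatrix_submatrix {ι : Type*} [Fintype ι] [DecidableEq ι] {q r : ℕ} (z : R)
    (e : ι ≃ Fin r × Fin q) (f : ι ≃ Fin q × Fin r) :
    ((trinomialMatrix q r r q z).submatrix e f).det =
      Perm.sign (e.trans ((Equiv.prodComm _ _).trans f.symm)) := by
  set L := trinomialFactor r q r q z
  set L' := trinomialFactor q r q r z
  set σ := e.trans ((Equiv.prodComm _ _).trans f.symm)
  have factorization : (trinomialMatrix q r r q z).submatrix e f =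
      L.submatrix e e * (L'ᵀ.submatrix f f).submatrix σ id := by
    rw [trinomialMatrix_eq_mul z (min_le_left r r) (min_le_left q q),
      ← Matrix.submatrix_mul_equiv _ _ _ e _]
    congr 1
    ext x y
    simp [L', σ]
  rw [factorization, Matrix.det_mul, Matrix.det_permute, Matrix.det_submatrix_equiv_self,
    Matrix.det_submatrix_equiv_self, Matrix.det_transpose, det_trinomialFactor,
    det_trinomialFactor, one_mul, mul_one]

lemma rank_trinomialMatrix [Nontrivial R] (q r μ ν : ℕ) (z : R) :
    (trinomialMatrix q r μ ν z).rank = min μ r * min ν q := by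
  set m := min μ r with hm
  set n := min ν q with hn
  have card_eq : Fintype.card (Fin m × Fin n) = m * n := by simp
  apply le_antisymm
  · rw [trinomialMatrix_eq_mul z hm.ge hn.ge, ← card_eq]
    exact (Matrix.rank_mul_le_left _ _).trans (Matrix.rank_le_card_width _)
  · let leading : Matrix (Fin m × Fin n) (Fin m × Fin n) R :=
      (trinomialMatrix n m m n z).submatrix (Equiv.refl _) (Equiv.prodComm _ _)
    have leading_isUnit : IsUnit leading := by
      rw [Matrix.isUnit_iff_isUnit_det, det_trinomialMatrix_submatrix]
      exact (Perm.sign _).isUnit.map (Int.castRingHom R)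
    calc
      m * n = leading.rank := by rw [Matrix.rank_of_isUnit _ leading_isUnit, card_eq]
      _ = ((trinomialMatrix q r μ ν z).submatrix
            (Prod.map (Fin.castLE (min_le_left μ r)) (Fin.castLE (min_le_right ν q)))
            (Prod.map (Fin.castLE (min_le_left ν q)) (Fin.castLE (min_le_right μ r)) ∘
              Prod.swap)).rank := rfl
      _ ≤ (trinomialMatrix q r μ ν z).rank := Matrix.rank_submatrix_le _ _ _

lemma det_trinomialMatrix_submatrix_bIdx (q r : ℕ) (z : R) :
    ((trinomialMatrix q r r q z).submatrix (bIdx r q)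
      (fun x => bIdx q r (Fin.cast (mul_comm r q) x))).det =
        (-1) ^ (q * r * (q - 1) * (r - 1) / 4) := by
  have h := det_trinomialMatrix_submatrix z finProdFinEquiv.symm
    ((finCongr (mul_comm r q)).trans finProdFinEquiv.symm)
  refine h.trans ?_
  change ((Perm.sign (majorSwap r q) : ℤ) : R) = _
  rw [sign_majorSwap, mul_comm (r.choose 2), choose_two_mul_choose_two]
  simp

end DeterminantAndRank

end

theorem statement4_general {R : Type*} [CommRing R] [Nontrivial R] (q r μ ν : ℕ) (z : R) :
    (trinomialMatrix q r μ ν z).rank = min μ r * min ν q ∧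
    IsUnit ((trinomialMatrix q r r q z).submatrix (bIdx r q)
      (fun x => bIdx q r (Fin.cast (mul_comm r q) x))) ∧
    ((trinomialMatrix q r r q z).submatrix (bIdx r q)
      (fun x => bIdx q r (Fin.cast (mul_comm r q) x))).det =
        (-1) ^ (q * r * (q - 1) * (r - 1) / 4) := by
  refine ⟨rank_trinomialMatrix q r μ ν z, ?_, det_trinomialMatrix_submatrix_bIdx q r z⟩
  rw [Matrix.isUnit_iff_isUnit_det, det_trinomialMatrix_submatrix_bIdx]
  exact isUnit_one.neg.pow _

lemma Acal_eq_trinomialMatrix (q r μ ν : ℕ) (z : ℝ) :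
    Acal q r μ ν z = trinomialMatrix q r μ ν z := by
  ext ⟨i, a⟩ ⟨j, b⟩
  simp only [Acal, Amat, trinomialMatrix, Matrix.of_apply, trinomialCoeff_eq_choose_mul_choose]
  split_ifs with h
  · rfl
  · rcases lt_or_ge ((i : ℕ) + j) a with ha | ha
    · simp [Nat.choose_eq_zero_of_lt ha]
    · simp [Nat.choose_eq_zero_of_lt (show (i : ℕ) + j - a < b by lia)]

theorem statement4 (q r μ ν : ℕ) (hq : 0 < q) (hr : 0 < r) (hμ : 0 < μ) (hν : 0 < ν) :
    (∀ z : ℝ, (Acal q r μ ν z).rank = min μ r * min ν q) ∧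
    (μ = r → ν = q → ∀ z : ℝ,
      IsUnit ((Acal q r r q z).submatrix (bIdx r q)
        (fun x => bIdx q r (Fin.cast (mul_comm r q) x))) ∧
      ((Acal q r r q z).submatrix (bIdx r q)
        (fun x => bIdx q r (Fin.cast (mul_comm r q) x))).det =
        (-1 : ℝ) ^ (q * r * (q - 1) * (r - 1) / 4)) := by
  simp only [Acal_eq_trinomialMatrix]
  exact ⟨fun z => (statement4_general q r μ ν z).1, fun _ _ z => (statement4_general q r μ ν z).2⟩
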